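/- Let (Ω, μ) be a probability space and let D, Y, F, Z be random variables on Ω taking values in finite types. Suppose (i) Z is conditionally independent of the pair (D, Y) given F, i.e. for all values z, d, y, f one has P(Z=z, D=d, Y=y, F=f) · P(F=f) = P(Z=z, F=f) · P(D=d, Y=y, F=f) (the Markov chain (D,Y) → F → Z); (ii) Y is independent of D, i.e. P(Y=y, D=d) = P(Y=y) · P(D=d) for all y, d; and (iii) I(Z;Y) = I(F;Y). Then I(Z;D) ≤ I(Z;F) − I(F;Y). -/

import Mathlib

open MeasureTheory

/-- Probability that the random variable `X` takes the value `x`. -/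
noncomputable def prob {Ω : Type*} [MeasurableSpace Ω] (μ : Measure Ω)
    {α : Type*} (X : Ω → α) (x : α) : ℝ :=
  (μ (X ⁻¹' {x})).toReal

/-- Shannon entropy (natural logarithm) of a finitely-valued random variable. -/
noncomputable def entropy {Ω : Type*} [MeasurableSpace Ω] (μ : Measure Ω)
    {α : Type*} [Fintype α] (X : Ω → α) : ℝ :=
  -∑ x, prob μ X x * Real.log (prob μ X x)

/-- Conditional entropy `H(X|Y) = H(X,Y) - H(Y)`. -/
noncomputable def condEntropy {Ω : Type*} [MeasurableSpace Ω] (μ : Measure Ω)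
    {α β : Type*} [Fintype α] [Fintype β] (X : Ω → α) (Y : Ω → β) : ℝ :=
  entropy μ (fun ω => (X ω, Y ω)) - entropy μ Y

/-- Mutual information `I(X;Y) = H(X) + H(Y) - H(X,Y)`. -/
noncomputable def mutualInfo {Ω : Type*} [MeasurableSpace Ω] (μ : Measure Ω)
    {α β : Type*} [Fintype α] [Fintype β] (X : Ω → α) (Y : Ω → β) : ℝ :=
  entropy μ X + entropy μ Y - entropy μ (fun ω => (X ω, Y ω))

/-- Conditional mutual information `I(X;Y|Z) = H(X|Z) + H(Y|Z) - H(⟨X,Y⟩|Z)`. -/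
noncomputable def condMutualInfo {Ω : Type*} [MeasurableSpace Ω] (μ : Measure Ω)
    {α β γ : Type*} [Fintype α] [Fintype β] [Fintype γ]
    (X : Ω → α) (Y : Ω → β) (Z : Ω → γ) : ℝ :=
  condEntropy μ X Z + condEntropy μ Y Z - condEntropy μ (fun ω => (X ω, Y ω)) Z

section Helpers

variable {Ω : Type*} [MeasurableSpace Ω] (μ : Measure Ω)

lemma prob_nonneg' {α : Type*} (X : Ω → α) (x : α) : 0 ≤ prob μ X x := ENNReal.toReal_nonneg

lemma prob_inj {α β : Type*} (W : Ω → α) (g : α → β) (hg : Function.Injective g) (w : α) :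
    prob μ (fun ω => g (W ω)) (g w) = prob μ W w := by
  unfold prob
  congr 2
  ext ω
  simp [hg.eq_iff]

variable [IsProbabilityMeasure μ]

lemma prob_le {α β : Type*} (W : Ω → α) (g : α → β) (w : α) :
    prob μ W w ≤ prob μ (fun ω => g (W ω)) (g w) := by
  unfold prob
  apply ENNReal.toReal_mono (measure_ne_top _ _)
  apply measure_mono
  intro ω h
  simp only [Set.mem_preimage, Set.mem_singleton_iff] at h ⊢
  rw [h]

open Classical in
lemma prob_map {α β : Type*} [Fintype α] [MeasurableSpace α] [MeasurableSingletonClass α]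
    (W : Ω → α) (hW : Measurable W) (g : α → β) (x : β) :
    prob μ (fun ω => g (W ω)) x = ∑ w, if g w = x then prob μ W w else 0 := by
  rw [← Finset.sum_filter]
  unfold prob
  rw [← ENNReal.toReal_sum (fun _ _ => measure_ne_top _ _),
    sum_measure_preimage_singleton _ (fun y _ => hW (measurableSet_singleton y))]
  congr 2
  ext ω
  simp

lemma prob_sum {α : Type*} [Fintype α] [MeasurableSpace α] [MeasurableSingletonClass α]
    (W : Ω → α) (hW : Measurable W) : ∑ w, prob μ W w = 1 := by
  have h := prob_map μ W hW (fun _ => ()) ()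
  simp only [if_true] at h
  rw [← h]
  simp [prob]

lemma entropy_map {α β : Type*} [Fintype α] [Fintype β] [MeasurableSpace α]
    [MeasurableSingletonClass α] (W : Ω → α) (hW : Measurable W) (g : α → β) :
    entropy μ (fun ω => g (W ω)) =
      -∑ w, prob μ W w * Real.log (prob μ (fun ω => g (W ω)) (g w)) := by
  classical
  unfold entropy
  congr 1
  have : ∀ x, prob μ (fun ω => g (W ω)) x * Real.log (prob μ (fun ω => g (W ω)) x) =
      ∑ w, if g w = x then prob μ W w * Real.log (prob μ (fun ω => g (W ω)) (g w)) else 0 := by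
    intro x
    nth_rw 1 [prob_map μ W hW g x]
    rw [Finset.sum_mul]
    apply Finset.sum_congr rfl
    intro w _
    split_ifs with h
    · rw [h]
    · simp
  simp_rw [this]
  rw [Finset.sum_comm]
  simp

lemma entropy_inj {α β : Type*} [Fintype α] [Fintype β] [MeasurableSpace α]
    [MeasurableSingletonClass α] (W : Ω → α) (hW : Measurable W) (g : α → β)
    (hg : Function.Injective g) :
    entropy μ (fun ω => g (W ω)) = entropy μ W := by
  rw [entropy_map μ W hW g]
  simp_rw [prob_inj μ W g hg]
  rfl

lemma entropy_indep {α β : Type*} [Fintype α] [Fintype β]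
    [MeasurableSpace α] [MeasurableSingletonClass α]
    [MeasurableSpace β] [MeasurableSingletonClass β]
    (A : Ω → α) (B : Ω → β) (hA : Measurable A) (hB : Measurable B)
    (h : ∀ a b, prob μ (fun ω => (A ω, B ω)) (a, b) = prob μ A a * prob μ B b) :
    entropy μ (fun ω => (A ω, B ω)) = entropy μ A + entropy μ B := by
  have hW : Measurable (fun ω => (A ω, B ω)) := hA.prodMk hB
  have e1 := entropy_map μ _ hW Prod.fst
  have e2 := entropy_map μ _ hW Prod.snd
  dsimp only at e1 e2
  change entropy μ A = _ at e1
  change entropy μ B = _ at e2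
  rw [e1, e2, entropy, ← neg_add, ← Finset.sum_add_distrib]
  congr 1
  apply Finset.sum_congr rfl
  rintro ⟨a, b⟩ _
  change _ = _ * Real.log (prob μ A a) + _ * Real.log (prob μ B b)
  by_cases ha : prob μ A a = 0
  · simp [h, ha]
  by_cases hb : prob μ B b = 0
  · simp [h, hb]
  rw [h, Real.log_mul ha hb]
  ring

section Triple

variable {α β γ : Type*} [Fintype α] [Fintype β] [Fintype γ]
    [MeasurableSpace α] [MeasurableSingletonClass α]
    [MeasurableSpace β] [MeasurableSingletonClass β]
    [MeasurableSpace γ] [MeasurableSingletonClass γ]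
    (A : Ω → α) (B : Ω → β) (C : Ω → γ)

lemma entropy_triple (hA : Measurable A) (hB : Measurable B) (hC : Measurable C) :
    entropy μ (fun ω => (A ω, B ω, C ω)) + entropy μ C
      - entropy μ (fun ω => (A ω, C ω)) - entropy μ (fun ω => (B ω, C ω)) =
    ∑ w : α × β × γ, prob μ (fun ω => (A ω, B ω, C ω)) w *
      (Real.log (prob μ (fun ω => (A ω, C ω)) (w.1, w.2.2))
        + Real.log (prob μ (fun ω => (B ω, C ω)) (w.2.1, w.2.2))
        - Real.log (prob μ (fun ω => (A ω, B ω, C ω)) w)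
        - Real.log (prob μ C w.2.2)) := by
  have hW : Measurable (fun ω => (A ω, B ω, C ω)) := hA.prodMk (hB.prodMk hC)
  have e1 := entropy_map μ _ hW (fun w => w.2.2)
  have e2 := entropy_map μ _ hW (fun w => (w.1, w.2.2))
  have e3 := entropy_map μ _ hW (fun w => (w.2.1, w.2.2))
  dsimp only at e1 e2 e3
  rw [e1, e2, e3, entropy]
  simp_rw [mul_sub, mul_add, Finset.sum_sub_distrib, Finset.sum_add_distrib]
  ring

lemma entropy_markov (hA : Measurable A) (hB : Measurable B) (hC : Measurable C)
    (h : ∀ a b c, prob μ (fun ω => (A ω, B ω, C ω)) (a, b, c) * prob μ C c =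
      prob μ (fun ω => (A ω, C ω)) (a, c) * prob μ (fun ω => (B ω, C ω)) (b, c)) :
    entropy μ (fun ω => (A ω, B ω, C ω)) + entropy μ C
      - entropy μ (fun ω => (A ω, C ω)) - entropy μ (fun ω => (B ω, C ω)) = 0 := by
  rw [entropy_triple μ A B C hA hB hC]
  apply Finset.sum_eq_zero
  rintro ⟨a, b, c⟩ _
  dsimp only
  rcases (prob_nonneg' μ (fun ω => (A ω, B ω, C ω)) (a, b, c)).eq_or_lt with h0 | h0
  · rw [← h0]; simp
  have h1 := h0.trans_le (prob_le μ (fun ω => (A ω, B ω, C ω)) (fun w => w.2.2) (a, b, c))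
  have h2 := h0.trans_le (prob_le μ (fun ω => (A ω, B ω, C ω)) (fun w => (w.1, w.2.2)) (a, b, c))
  have h3 := h0.trans_le (prob_le μ (fun ω => (A ω, B ω, C ω)) (fun w => (w.2.1, w.2.2)) (a, b, c))
  dsimp only at h1 h2 h3
  have := congrArg Real.log (h a b c)
  rw [Real.log_mul h0.ne' h1.ne', Real.log_mul h2.ne' h3.ne'] at this
  rw [mul_eq_zero]
  right
  linarith

lemma marg_right {α γ : Type*} [Fintype α] [Fintype γ]
    [MeasurableSpace α] [MeasurableSingletonClass α]
    [MeasurableSpace γ] [MeasurableSingletonClass γ]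
    (A : Ω → α) (C : Ω → γ) (hA : Measurable A) (hC : Measurable C) (c : γ) :
    ∑ a, prob μ (fun ω => (A ω, C ω)) (a, c) = prob μ C c := by
  classical
  have := prob_map μ _ (hA.prodMk hC) Prod.snd c
  dsimp only at this
  change prob μ C c = _ at this
  rw [this, Fintype.sum_prod_type]
  simp

lemma entropy_submod (hA : Measurable A) (hB : Measurable B) (hC : Measurable C) :
    entropy μ (fun ω => (A ω, B ω, C ω)) + entropy μ C
      - entropy μ (fun ω => (A ω, C ω)) - entropy μ (fun ω => (B ω, C ω)) ≤ 0 := by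
  rw [entropy_triple μ A B C hA hB hC]
  have hW : Measurable (fun ω => (A ω, B ω, C ω)) := hA.prodMk (hB.prodMk hC)
  have key : ∀ w : α × β × γ, prob μ (fun ω => (A ω, B ω, C ω)) w *
      (Real.log (prob μ (fun ω => (A ω, C ω)) (w.1, w.2.2))
        + Real.log (prob μ (fun ω => (B ω, C ω)) (w.2.1, w.2.2))
        - Real.log (prob μ (fun ω => (A ω, B ω, C ω)) w)
        - Real.log (prob μ C w.2.2)) ≤
      prob μ (fun ω => (A ω, C ω)) (w.1, w.2.2) * prob μ (fun ω => (B ω, C ω)) (w.2.1, w.2.2)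
        / prob μ C w.2.2 - prob μ (fun ω => (A ω, B ω, C ω)) w := by
    rintro ⟨a, b, c⟩
    dsimp only
    rcases (prob_nonneg' μ (fun ω => (A ω, B ω, C ω)) (a, b, c)).eq_or_lt with h0 | h0
    · rw [← h0]
      simp only [zero_mul, sub_zero]
      exact div_nonneg (mul_nonneg (prob_nonneg' _ _ _) (prob_nonneg' _ _ _)) (prob_nonneg' _ _ _)
    have h1 := h0.trans_le (prob_le μ (fun ω => (A ω, B ω, C ω)) (fun w => w.2.2) (a, b, c))
    have h2 := h0.trans_le
      (prob_le μ (fun ω => (A ω, B ω, C ω)) (fun w => (w.1, w.2.2)) (a, b, c))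
    have h3 := h0.trans_le
      (prob_le μ (fun ω => (A ω, B ω, C ω)) (fun w => (w.2.1, w.2.2)) (a, b, c))
    dsimp only at h1 h2 h3
    change 0 < prob μ C c at h1
    generalize prob μ (fun ω => (A ω, B ω, C ω)) (a, b, c) = p at *
    generalize prob μ (fun ω => (A ω, C ω)) (a, c) = q at *
    generalize prob μ (fun ω => (B ω, C ω)) (b, c) = r at *
    generalize prob μ C c = s at *
    have hl := Real.log_le_sub_one_of_pos (x := q * r / (p * s)) (by positivity)
    rw [Real.log_div (by positivity) (by positivity), Real.log_mul h2.ne' h3.ne',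
      Real.log_mul h0.ne' h1.ne'] at hl
    calc _ = p * (Real.log q + Real.log r - (Real.log p + Real.log s)) := by ring
      _ ≤ p * (q * r / (p * s) - 1) := by gcongr
      _ = _ := by field_simp
  refine (Finset.sum_le_sum (fun w _ => key w)).trans ?_
  rw [Finset.sum_sub_distrib, prob_sum μ _ hW]
  have : ∑ w : α × β × γ, prob μ (fun ω => (A ω, C ω)) (w.1, w.2.2) *
      prob μ (fun ω => (B ω, C ω)) (w.2.1, w.2.2) / prob μ C w.2.2 = 1 := by
    rw [← prob_sum μ C hC]
    calc _ = ∑ c, (∑ a, prob μ (fun ω => (A ω, C ω)) (a, c)) *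
          (∑ b, prob μ (fun ω => (B ω, C ω)) (b, c)) / prob μ C c := by
          simp_rw [Fintype.sum_prod_type, Finset.sum_mul_sum, Finset.sum_div]
          rw [Finset.sum_comm' (s' := fun _ => Finset.univ) (t' := Finset.univ) (by simp)]
          simp_rw [fun b : β => Finset.sum_comm (s := (Finset.univ : Finset α))
            (t := (Finset.univ : Finset γ)) (f := fun a c =>
            prob μ (fun ω => (A ω, C ω)) (a, c) * prob μ (fun ω => (B ω, C ω)) (b, c)
              / prob μ C c)]
          rw [Finset.sum_comm]
          refine Finset.sum_congr rfl fun c _ => ?_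
          rw [Finset.sum_comm]
      _ = _ := by
          refine Finset.sum_congr rfl fun c _ => ?_
          rw [marg_right μ A C hA hC, marg_right μ B C hB hC]
          exact mul_self_div_self _
  rw [this]
  simp

end Triple

end Helpers

/-- Proposition 4.1: if `(D,Y) → F → Z` is a Markov chain, `Y` is independent of `D`,
and `Z` is sufficient for `F` in the sense that `I(Z;Y) = I(F;Y)`, then
`I(Z;D) ≤ I(Z;F) - I(F;Y)`. -/
theorem stmt0
    {Ω : Type*} [MeasurableSpace Ω] (μ : Measure Ω) [IsProbabilityMeasure μ]
    {𝓓 𝓨 𝓕 𝓩 : Type*} [Fintype 𝓓] [Fintype 𝓨] [Fintype 𝓕] [Fintype 𝓩]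
    [MeasurableSpace 𝓓] [MeasurableSingletonClass 𝓓]
    [MeasurableSpace 𝓨] [MeasurableSingletonClass 𝓨]
    [MeasurableSpace 𝓕] [MeasurableSingletonClass 𝓕]
    [MeasurableSpace 𝓩] [MeasurableSingletonClass 𝓩]
    (D : Ω → 𝓓) (Y : Ω → 𝓨) (F : Ω → 𝓕) (Z : Ω → 𝓩)
    (hD : Measurable D) (hY : Measurable Y) (hF : Measurable F) (hZ : Measurable Z)
    (hMarkov : ∀ (z : 𝓩) (d : 𝓓) (y : 𝓨) (f : 𝓕),
      prob μ (fun ω => (Z ω, D ω, Y ω, F ω)) (z, d, y, f) * prob μ F f =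
        prob μ (fun ω => (Z ω, F ω)) (z, f) *
          prob μ (fun ω => (D ω, Y ω, F ω)) (d, y, f))
    (hIndep : ∀ (y : 𝓨) (d : 𝓓),
      prob μ (fun ω => (Y ω, D ω)) (y, d) = prob μ Y y * prob μ D d)
    (hSuff : mutualInfo μ Z Y = mutualInfo μ F Y) :
    mutualInfo μ Z D ≤ mutualInfo μ Z F - mutualInfo μ F Y := by
  have hDY : Measurable (fun ω => (D ω, Y ω)) := hD.prodMk hY
  have s1 := entropy_submod μ D Y Z hD hY hZ
  have s2 := entropy_submod μ Z F (fun ω => (D ω, Y ω)) hZ hF hDY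
  have m := entropy_markov μ Z (fun ω => (D ω, Y ω)) F hZ hDY hF (by
    rintro z ⟨d, y⟩ f
    have := hMarkov z d y f
    rw [← prob_inj μ (fun ω => (Z ω, D ω, Y ω, F ω))
        (fun w => (w.1, (w.2.1, w.2.2.1), w.2.2.2))
        (by rintro ⟨_, _, _, _⟩ ⟨_, _, _, _⟩ h; simp_all),
      ← prob_inj μ (fun ω => (D ω, Y ω, F ω)) (fun w => ((w.1, w.2.1), w.2.2))
        (by rintro ⟨_, _, _⟩ ⟨_, _, _⟩ h; simp_all)] at this
    exact this)
  have i := entropy_indep μ Y D hY hD hIndep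
  have p1 := entropy_inj μ (fun ω => (Y ω, D ω)) (hY.prodMk hD) Prod.swap Prod.swap_injective
  have p2 := entropy_inj μ (fun ω => (D ω, Z ω)) (hD.prodMk hZ) Prod.swap Prod.swap_injective
  have p3 := entropy_inj μ (fun ω => (Y ω, Z ω)) (hY.prodMk hZ) Prod.swap Prod.swap_injective
  have p4 := entropy_inj μ (fun ω => (D ω, Y ω, Z ω)) (hD.prodMk (hY.prodMk hZ))
    (fun w => (w.2.2, (w.1, w.2.1)))
    (by rintro ⟨_, _, _⟩ ⟨_, _, _⟩ h; simp_all)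
  have p5 := entropy_inj μ (fun ω => (Z ω, (D ω, Y ω), F ω)) (hZ.prodMk (hDY.prodMk hF))
    (fun w => (w.1, w.2.2, w.2.1))
    (by rintro ⟨_, _, _⟩ ⟨_, _, _⟩ h; simp_all)
  have p6 := entropy_inj μ (fun ω => ((D ω, Y ω), F ω)) (hDY.prodMk hF)
    Prod.swap Prod.swap_injective
  simp only [Prod.swap_prod_mk] at p1 p2 p3 p4 p5 p6
  rw [← hSuff]
  unfold mutualInfo
  linarith
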